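/- There exists a class of languages learnable by a monotone behaviorally correct full-information learner from informants but not by any dual monotone one: [Inf G Mon Bc] \ [Inf G Mon^d Bc] ≠ ∅; in fact, with a_i = 3i, b_i = 3i+1, c_i = 3i+2, the class consisting of X = {a_i | i ∈ ℕ}, all Y_n = {a_i | i ≤ n} ∪ {b_i | n < i}, and all Z_{n,m} = {a_i | i ≤ n} ∪ {b_i | n < i ≤ m} ∪ {c_m} for n < m witnesses this separation. -/

import Mathlib

open Filter Classical

namespace InfBc

/-! ### Basic notions: r.e. sets, informants, learners -/

/-- The `e`-th recursively enumerable set (via an acceptable numbering of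
partial computable functions, `W e = dom φ_e`). -/
def W (e : ℕ) : Set ℕ := {x | ((Denumerable.ofNat Nat.Partrec.Code e).eval x).Dom}

/-- A language is recursively enumerable. -/
def RE (L : Set ℕ) : Prop := ∃ e, W e = L

abbrev Datum := ℕ × Bool
abbrev Seq := List Datum
abbrev Informant := ℕ → Datum
abbrev HypSeq := ℕ → Part ℕ
/-- Learners are partial functions; all input types are coded into `ℕ`. -/
abbrev Learner := ℕ →. ℕ
abbrev Restriction := HypSeq → Informant → Prop

/-- Positive information of an infinite sequence. -/
def posI (I : Informant) : Set ℕ := {x | ∃ n, I n = (x, true)}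
/-- Negative information of an infinite sequence. -/
def negI (I : Informant) : Set ℕ := {x | ∃ n, I n = (x, false)}

/-- `I` is an informant for the language `L`. -/
def IsInformant (I : Informant) (L : Set ℕ) : Prop := posI I = L ∧ negI I = Lᶜ

/-- `I` is an informant (for some language), i.e. `I ∈ Inf`. -/
def IsInf (I : Informant) : Prop := IsInformant I (posI I)

/-- `I` is a canonical informant. -/
def Canonical (I : Informant) : Prop := ∀ x, I x = (x, true) ∨ I x = (x, false)

/-- `I[n]`, the length-`n` initial segment of `I`. -/
def segment (I : Informant) (n : ℕ) : Seq := (List.range n).map I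

/-- Positive information of a finite sequence. -/
def posS (σ : Seq) : Set ℕ := {x | (x, true) ∈ σ}
/-- Negative information of a finite sequence. -/
def negS (σ : Seq) : Set ℕ := {x | (x, false) ∈ σ}
/-- The content of a finite sequence, as a set. -/
def contentS (σ : Seq) : Set Datum := {a | a ∈ σ}

/-! ### Interaction operators -/

abbrev InteractionOperator := Learner → Informant → HypSeq

/-- Full-information (Gold-style) interaction: `G(h,I)(i) = h(I[i])`. -/
def Gop : InteractionOperator := fun h I i => h (Encodable.encode (segment I i))

/-- Set-driven interaction: `Sd(h,I)(i) = h(content(I[i]))`. -/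
def Sdop : InteractionOperator := fun h I i => h (Encodable.encode (segment I i).toFinset)

/-- The iterated evaluation of an iterative learner on a finite sequence:
start with the initial hypothesis `h(none)` and feed the data one by one. -/
def iterExtend (h : Learner) (σ : Seq) : Part ℕ :=
  σ.foldl (fun pe a => pe.bind fun e => h (Encodable.encode (some (e, a))))
    (h (Encodable.encode (none : Option (ℕ × Datum))))

/-- Iterative interaction: `It(h,I)(i)` is obtained by feeding `I[i]` one datum
at a time, each time updating the previous hypothesis. -/
def Itop : InteractionOperator := fun h I i => iterExtend h (segment I i)

/-- An iterative learner is confluent if the order and multiplicity in which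
the content is presented does not matter. -/
def ConfluentLearner (h : Learner) : Prop :=
  ∀ σ τ : Seq, contentS σ = contentS τ → iterExtend h σ = iterExtend h τ

/-- Confluently iterative interaction. -/
noncomputable def CflItop : InteractionOperator := fun h I i =>
  if ConfluentLearner h then iterExtend h (segment I i) else Part.none

/-- `β ≼ β'`: every (partial computable) `β`-learner can be translated into a
`β'`-learner with the same hypothesis sequence on every informant. -/
def OpLe (β β' : InteractionOperator) : Prop :=
  ∀ h : Learner, Partrec h → ∃ h' : Learner, Partrec h' ∧
    ∀ I : Informant, IsInf I → ∀ n, β h I n = β' h' I n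

/-! ### Learning restrictions -/

/-- The trivial restriction `T`. -/
def TT : Restriction := fun _ _ => True

/-- Explanatory identification. -/
def Ex : Restriction := fun p I =>
  ∃ q, W q = posI I ∧ ∀ᶠ n in atTop, p n = Part.some q

/-- Behaviorally correct identification. -/
def Bc : Restriction := fun p I => ∀ᶠ n in atTop, ∃ e ∈ p n, W e = posI I

/-- Consistency of a hypothesis with a finite sequence of data. -/
def ConsH (e : ℕ) (σ : Seq) : Prop := posS σ ⊆ W e ∧ negS σ ∩ W e = ∅

/-- Consistency of a hypothesis sequence with an informant. -/
def Cons : Restriction := fun p I => ∀ n, ∃ e ∈ p n, ConsH e (segment I n)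

/-- Strongly monotone. -/
def SMon : Restriction := fun p _ =>
  ∀ s t, s ≤ t → ∀ e ∈ p s, ∀ e' ∈ p t, W e ⊆ W e'

/-- Dual strongly monotone. -/
def SMond : Restriction := fun p _ =>
  ∀ s t, s ≤ t → ∀ e ∈ p s, ∀ e' ∈ p t, W e' ⊆ W e

/-- Monotone. -/
def Mon : Restriction := fun p I =>
  ∀ s t, s ≤ t → ∀ e ∈ p s, ∀ e' ∈ p t, W e ∩ posI I ⊆ W e' ∩ posI I

/-- Dual monotone. -/
def Mond : Restriction := fun p I =>
  ∀ s t, s ≤ t → ∀ e ∈ p s, ∀ e' ∈ p t, (W e)ᶜ ∩ negI I ⊆ (W e')ᶜ ∩ negI I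

/-- Weakly monotone. -/
def WMon : Restriction := fun p I =>
  ∀ s t, s ≤ t → ∀ e ∈ p s, ConsH e (segment I t) → ∀ e' ∈ p t, W e ⊆ W e'

/-- Dual weakly monotone. -/
def WMond : Restriction := fun p I =>
  ∀ s t, s ≤ t → ∀ e ∈ p s, ConsH e (segment I t) → ∀ e' ∈ p t, W e' ⊆ W e

/-- Cautious. -/
def Caut : Restriction := fun p _ =>
  ∀ s t, s < t → ∀ e ∈ p s, ∀ e' ∈ p t, ¬ W e' ⊂ W e

/-- Target cautious. -/
def CautTar : Restriction := fun p I =>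
  ∀ s, ∀ e ∈ p s, ¬ posI I ⊂ W e

/-- Finitely cautious. -/
def CautFin : Restriction := fun p _ =>
  ∀ s t, s < t → ∀ e ∈ p s, ∀ e' ∈ p t, W e' ⊂ W e → (W e').Infinite

/-- Infinitely cautious. -/
def CautInf : Restriction := fun p _ =>
  ∀ s t, s < t → ∀ e ∈ p s, ∀ e' ∈ p t, W e' ⊂ W e → (W e').Finite

/-! ### Learnability -/

/-- The class of admissible learners: all partial computable learners. -/
def AllL : Learner → Prop := fun _ => True
/-- The class of admissible learners: total computable learners (`ℛ`). -/
def TotalL : Learner → Prop := fun h => ∀ x, (h x).Dom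
/-- Admissible informants: all informants (`Inf`). -/
def AllI : Informant → Prop := fun _ => True

/-- `h` learns `L` in the setting given by admissible informants `P`,
interaction operator `β` and local restriction `δ`. -/
def LearnsWith (P : Informant → Prop) (β : InteractionOperator) (δ : Restriction)
    (h : Learner) (L : Set ℕ) : Prop :=
  RE L ∧ ∀ I : Informant, P I → IsInformant I L → δ (β h I) I

/-- `[τ(α) C P β δ]`: the collection of all classes of languages learnable by
some learner in `C` that satisfies the global restriction `α` on all admissible
informants, under interaction operator `β` and local restriction `δ`. -/
def Learnable (α : Restriction) (C : Learner → Prop) (P : Informant → Prop)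
    (β : InteractionOperator) (δ : Restriction) : Set (Set (Set ℕ)) :=
  {𝓛 | ∃ h : Learner, Partrec h ∧ C h ∧
        (∀ I : Informant, IsInf I → P I → α (β h I) I) ∧
        ∀ L ∈ 𝓛, LearnsWith P β δ h L}

/-! ### Properties of restrictions -/

/-- A learning restriction is delayable if it is preserved under postponing
hypotheses along a non-decreasing unbounded function. -/
def Delayable (δ : Restriction) : Prop :=
  ∀ I I' : Informant, IsInf I → IsInf I' → Set.range I = Set.range I' →
    ∀ (p : HypSeq) (s : ℕ → ℕ), Monotone s → (∀ m, ∃ n, m ≤ s n) →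
      δ p I → (∀ n, contentS (segment I (s n)) ⊆ contentS (segment I' n)) →
      δ (fun n => p (s n)) I'

/-- A learning restriction is semantic if it is indifferent to replacing the
hypothesis sequence by a semantically equivalent one. -/
def Semantic (δ : Restriction) : Prop :=
  ∀ (p p' : HypSeq) (I : Informant), δ p I →
    (∀ i, (p i).Dom ↔ (p' i).Dom) →
    (∀ i, ∀ e ∈ p i, ∀ e' ∈ p' i, W e = W e') →
    δ p' I


/-- `X = {a_i | i ∈ ℕ}` with `a_i = 3i`. -/
def X11 : Set ℕ := {x | ∃ i, x = 3 * i}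

/-- `Y_n = {a_i | i ≤ n} ∪ {b_i | n < i}` with `b_i = 3i + 1`. -/
def Y11 (n : ℕ) : Set ℕ :=
  {x | ∃ i, i ≤ n ∧ x = 3 * i} ∪ {x | ∃ i, n < i ∧ x = 3 * i + 1}

/-- `Z_{n,m} = {a_i | i ≤ n} ∪ {b_i | n < i ≤ m} ∪ {c_m}` with `c_m = 3m + 2`. -/
def Z11 (n m : ℕ) : Set ℕ :=
  {x | ∃ i, i ≤ n ∧ x = 3 * i} ∪ {x | ∃ i, n < i ∧ i ≤ m ∧ x = 3 * i + 1} ∪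
    {3 * m + 2}

/-- The witness class consisting of `X`, all `Y_n` and all `Z_{n,m}` (`n < m`). -/
def class11 : Set (Set ℕ) :=
  {X11} ∪ {S | ∃ n, S = Y11 n} ∪ {S | ∃ n m, n < m ∧ S = Z11 n m}

/-! ### Dual monotone learners fail: canonical informants -/

/-- The canonical informant of `L`. -/
noncomputable def canon (L : Set ℕ) : Informant := fun x => (x, decide (x ∈ L))

lemma posI_canon (L : Set ℕ) : posI (canon L) = L := by
  ext x; simp [posI, canon]

lemma negI_canon (L : Set ℕ) : negI (canon L) = Lᶜ := by
  ext x; simp [negI, canon]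

lemma isInformant_canon (L : Set ℕ) : IsInformant (canon L) L :=
  ⟨posI_canon L, negI_canon L⟩

lemma Gop_canon_congr (h : Learner) (L L' : Set ℕ) (s : ℕ)
    (H : ∀ x < s, (x ∈ L ↔ x ∈ L')) : Gop h (canon L) s = Gop h (canon L') s := by
  have : segment (canon L) s = segment (canon L') s := by
    unfold segment
    apply List.map_congr_left
    intro x hx
    simp [canon, H x (List.mem_range.1 hx)]
  simp only [Gop, this]

lemma not_dual : class11 ∉ Learnable TT AllL AllI Gop (fun p I => Mond p I ∧ Bc p I) := by
  rintro ⟨h, -, -, -, H⟩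
  have hX := ((H X11 (by simp [class11])).2 _ trivial (isInformant_canon _)).2
  obtain ⟨s, hs⟩ := hX.exists
  obtain ⟨e, he, hWe⟩ := hs
  have hY := ((H (Y11 s) (by simp [class11])).2 _ trivial (isInformant_canon _)).2
  obtain ⟨t, ⟨e', he', hWe'⟩, hst⟩ := (hY.and (eventually_ge_atTop s)).exists
  have hZ := ((H (Z11 s (s + t + 1)) (Or.inr ⟨s, s + t + 1, by omega, rfl⟩)).2 _ trivial
    (isInformant_canon _)).1
  rw [posI_canon] at hWe hWe'
  rw [Gop_canon_congr h X11 (Z11 s (s + t + 1)) s] at he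
  · rw [Gop_canon_congr h (Y11 s) (Z11 s (s + t + 1)) t] at he'
    · have := hZ s t hst e he e' he'
      rw [hWe, hWe', negI_canon] at this
      have h2 := @this (3 * (s + t + 2) + 1) ⟨by
        rintro ⟨i, hi⟩; omega, by
        rintro ((⟨i, hi, hx⟩ | ⟨i, hi, hj, hx⟩) | hx)
        · omega
        · omega
        · simp only [Set.mem_singleton_iff] at hx; omega⟩
      exact h2.1 (Or.inr ⟨s + t + 2, by omega, rfl⟩)
    · intro x hx
      constructor
      · rintro (⟨i, hi, rfl⟩ | ⟨i, hi, rfl⟩)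
        · exact Or.inl (Or.inl ⟨i, hi, rfl⟩)
        · exact Or.inl (Or.inr ⟨i, hi, by omega, rfl⟩)
      · rintro ((⟨i, hi, rfl⟩ | ⟨i, hi, hj, rfl⟩) | hx')
        · exact Or.inl ⟨i, hi, rfl⟩
        · exact Or.inr ⟨i, hi, rfl⟩
        · simp only [Set.mem_singleton_iff] at hx'; omega
  · intro x hx
    constructor
    · rintro ⟨i, rfl⟩
      exact Or.inl (Or.inl ⟨i, by omega, rfl⟩)
    · rintro ((⟨i, hi, rfl⟩ | ⟨i, hi, hj, rfl⟩) | hx')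
      · exact ⟨i, rfl⟩
      · omega
      · simp only [Set.mem_singleton_iff] at hx'; omega

/-! ### The monotone learner -/

/-- Some `a_j` with `a_j ≤ x` is known to be negative. -/
def NegBelow (σ : Seq) (x : ℕ) : Prop := ∃ d ∈ σ, d.2 = false ∧ d.1 % 3 = 0 ∧ d.1 ≤ x
/-- Some `c_m` with `c_m < x` is known to be positive. -/
def Cut (σ : Seq) (x : ℕ) : Prop := ∃ d ∈ σ, d.2 = true ∧ d.1 % 3 = 2 ∧ d.1 < x
/-- `x` is known to be positive. -/
def Seen (σ : Seq) (x : ℕ) : Prop := ∃ d ∈ σ, d.2 = true ∧ d.1 = x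

/-- The set conjectured on `σ`. -/
def Hyp (σ : Seq) (x : ℕ) : Prop :=
  (x % 3 = 0 ∧ ¬ NegBelow σ x) ∨ (x % 3 = 1 ∧ NegBelow σ x ∧ ¬ Cut σ x) ∨ (x % 3 = 2 ∧ Seen σ x)

lemma primrec_NegBelow : PrimrecPred fun p : Seq × ℕ => NegBelow p.1 p.2 := by
  have : PrimrecRel fun (d : Datum) (p : ℕ) => d.2 = false ∧ d.1 % 3 = 0 ∧ d.1 ≤ p := by
    refine PrimrecPred.and (Primrec.eq.comp (Primrec.snd.comp Primrec.fst) (Primrec.const _))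
      (PrimrecPred.and (Primrec.eq.comp (Primrec.nat_mod.comp (Primrec.fst.comp Primrec.fst)
        (Primrec.const _)) (Primrec.const _))
        (Primrec.nat_le.comp (Primrec.fst.comp Primrec.fst) Primrec.snd))
  exact this.exists_mem_list

lemma primrec_Cut : PrimrecPred fun p : Seq × ℕ => Cut p.1 p.2 := by
  have : PrimrecRel fun (d : Datum) (p : ℕ) => d.2 = true ∧ d.1 % 3 = 2 ∧ d.1 < p := by
    refine PrimrecPred.and (Primrec.eq.comp (Primrec.snd.comp Primrec.fst) (Primrec.const _))
      (PrimrecPred.and (Primrec.eq.comp (Primrec.nat_mod.comp (Primrec.fst.comp Primrec.fst)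
        (Primrec.const _)) (Primrec.const _))
        (Primrec.nat_lt.comp (Primrec.fst.comp Primrec.fst) Primrec.snd))
  exact this.exists_mem_list

lemma primrec_Seen : PrimrecPred fun p : Seq × ℕ => Seen p.1 p.2 := by
  have : PrimrecRel fun (d : Datum) (p : ℕ) => d.2 = true ∧ d.1 = p := by
    refine PrimrecPred.and (Primrec.eq.comp (Primrec.snd.comp Primrec.fst) (Primrec.const _))
        (Primrec.eq.comp (Primrec.fst.comp Primrec.fst) Primrec.snd)
  exact this.exists_mem_list

lemma primrec_Hyp : PrimrecPred fun p : Seq × ℕ => Hyp p.1 p.2 := by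
  have hm (k : ℕ) : PrimrecPred fun p : Seq × ℕ => p.2 % 3 = k :=
    Primrec.eq.comp (Primrec.nat_mod.comp Primrec.snd (Primrec.const _)) (Primrec.const _)
  exact ((hm 0).and primrec_NegBelow.not).or
    (((hm 1).and (primrec_NegBelow.and primrec_Cut.not)).or ((hm 2).and primrec_Seen))

lemma exists_learner : ∃ h : Learner, Partrec h ∧
    ∀ σ : Seq, ∃ e, h (Encodable.encode σ) = Part.some e ∧ W e = {x | Hyp σ x} := by
  have h1 : PrimrecPred fun n : ℕ =>
      Hyp ((Encodable.decode (α := Seq) n.unpair.1).getD []) n.unpair.2 :=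
    primrec_Hyp.comp (Primrec.pair (Primrec.option_getD.comp
      (Primrec.decode.comp (Primrec.fst.comp Primrec.unpair)) (Primrec.const []))
      (Primrec.snd.comp Primrec.unpair))
  have h2 := h1.computablePred.to_re
  have h3 := Partrec.map (g := fun _ _ => (0 : ℕ)) h2 (Computable.const 0).to₂
  obtain ⟨c, hc⟩ := Nat.Partrec.Code.exists_code.1 (Partrec.nat_iff.1 h3)
  refine ⟨fun n => Part.some (Encodable.encode (c.curry n)), ?_, fun σ => ⟨_, rfl, ?_⟩⟩
  · exact (Primrec.encode.comp
      (Nat.Partrec.Code.primrec₂_curry.comp (Primrec.const c) Primrec.id)).to_comp.partrec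
  · ext x
    simp [W, Nat.Partrec.Code.eval_curry, hc, Part.assert, Nat.unpair_pair]

/-- What a segment of an informant for `L` tells about `L`. -/
lemma mem_segment {I : Informant} {n : ℕ} {d : Datum} :
    d ∈ segment I n ↔ ∃ k < n, I k = d := by
  simp [segment]

lemma eventually_mem {I : Informant} {d : Datum} (h : ∃ k, I k = d) :
    ∀ᶠ n in atTop, d ∈ segment I n := by
  obtain ⟨k, hk⟩ := h
  filter_upwards [eventually_gt_atTop k] with n hn
  exact mem_segment.2 ⟨k, hn, hk⟩

/-- `σ` is correct about `L`. -/
def Correct (σ : Seq) (L : Set ℕ) : Prop := ∀ d ∈ σ, (d.2 = true ↔ d.1 ∈ L)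

lemma correct_segment {I : Informant} {L : Set ℕ} (h : IsInformant I L) (n : ℕ) :
    Correct (segment I n) L := by
  rintro ⟨x, b⟩ hd
  obtain ⟨k, -, hk⟩ := mem_segment.1 hd
  cases b
  · have : x ∈ negI I := ⟨k, hk⟩
    rw [h.2] at this
    simpa using this
  · have : x ∈ posI I := ⟨k, hk⟩
    rw [h.1] at this
    simpa using this

lemma mem_X {x : ℕ} : x ∈ X11 ↔ x % 3 = 0 := by
  constructor
  · rintro ⟨i, rfl⟩; omega
  · intro h; exact ⟨x / 3, by omega⟩

lemma mem_Y {n x : ℕ} : x ∈ Y11 n ↔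
    (x % 3 = 0 ∧ x < 3 * n + 3) ∨ (x % 3 = 1 ∧ 3 * n + 3 ≤ x) := by
  constructor
  · rintro (⟨i, hi, rfl⟩ | ⟨i, hi, rfl⟩) <;> omega
  · rintro (h | h)
    · exact Or.inl ⟨x / 3, by omega, by omega⟩
    · exact Or.inr ⟨x / 3, by omega, by omega⟩

lemma mem_Z {n m x : ℕ} : x ∈ Z11 n m ↔
    (x % 3 = 0 ∧ x < 3 * n + 3) ∨ (x % 3 = 1 ∧ 3 * n + 3 ≤ x ∧ x < 3 * m + 2) ∨
      x = 3 * m + 2 := by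
  constructor
  · rintro ((⟨i, hi, rfl⟩ | ⟨i, hi, hj, rfl⟩) | h)
    · omega
    · omega
    · simp only [Set.mem_singleton_iff] at h; omega
  · rintro (h | h | h)
    · exact Or.inl (Or.inl ⟨x / 3, by omega, by omega⟩)
    · exact Or.inl (Or.inr ⟨x / 3, by omega, by omega, by omega⟩)
    · exact Or.inr h

lemma hyp_X {σ : Seq} (h : Correct σ X11) : {x | Hyp σ x} = X11 := by
  have h1 (x : ℕ) : ¬ NegBelow σ x := by
    rintro ⟨d, hd, hf, hm, -⟩
    have := (h d hd).2 (mem_X.2 hm)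
    simp [hf] at this
  have h2 (x : ℕ) (hx : x % 3 = 2) : ¬ Seen σ x := by
    rintro ⟨d, hd, hf, rfl⟩
    have := mem_X.1 ((h d hd).1 hf)
    omega
  ext x
  have := h1 x
  have := h2 x
  simp only [Set.mem_ofPred_eq, Hyp, mem_X]
  tauto

lemma negBelow_iff {σ : Seq} {L : Set ℕ} (h : Correct σ L) {n : ℕ}
    (hL : ∀ x, x % 3 = 0 → (x ∈ L ↔ x < 3 * n + 3)) (hn : (3 * n + 3, false) ∈ σ) (x : ℕ) :
    NegBelow σ x ↔ 3 * n + 3 ≤ x := by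
  constructor
  · rintro ⟨d, hd, hf, hm, hx⟩
    have h1 := h d hd
    rw [hL _ hm, hf] at h1
    simp at h1
    omega
  · intro hx
    exact ⟨_, hn, rfl, by simp only; omega, hx⟩

lemma hyp_Y {σ : Seq} {n : ℕ} (h : Correct σ (Y11 n)) (hn : (3 * n + 3, false) ∈ σ) :
    {x | Hyp σ x} = Y11 n := by
  have h1 := negBelow_iff h (n := n) (fun x hx => by rw [mem_Y]; omega) hn
  have h2 (x : ℕ) : ¬ Cut σ x := by
    rintro ⟨d, hd, hf, hm, -⟩
    have := mem_Y.1 ((h d hd).1 hf)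
    omega
  have h3 (x : ℕ) (hx : x % 3 = 2) : ¬ Seen σ x := by
    rintro ⟨d, hd, hf, rfl⟩
    have := mem_Y.1 ((h d hd).1 hf)
    omega
  ext x
  have := h2 x
  have := h3 x
  simp only [Set.mem_ofPred_eq, Hyp, mem_Y, h1, not_le]
  tauto

lemma hyp_Z {σ : Seq} {n m : ℕ} (h : Correct σ (Z11 n m))
    (hn : (3 * n + 3, false) ∈ σ) (hm : (3 * m + 2, true) ∈ σ) :
    {x | Hyp σ x} = Z11 n m := by
  have h1 := negBelow_iff h (n := n) (fun x hx => by rw [mem_Z]; omega) hn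
  have h2 (x : ℕ) : Cut σ x ↔ 3 * m + 2 < x := by
    constructor
    · rintro ⟨d, hd, hf, hm, hx⟩
      have := mem_Z.1 ((h d hd).1 hf)
      omega
    · intro hx
      exact ⟨_, hm, rfl, by simp only; omega, hx⟩
  have h3 (x : ℕ) (hx : x % 3 = 2) : Seen σ x ↔ x = 3 * m + 2 := by
    constructor
    · rintro ⟨d, hd, hf, rfl⟩
      have := mem_Z.1 ((h d hd).1 hf)
      omega
    · rintro rfl
      exact ⟨_, hm, rfl, rfl⟩
  ext x
  have := h3 x
  simp only [Set.mem_ofPred_eq, Hyp, mem_Z, h1, h2, not_le]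
  by_cases hx : x % 3 = 2
  · rw [h3 x hx]; omega
  · simp only [hx, false_and, or_false]; omega

/-- Monotonicity of the conjectures for suitable targets. -/
lemma hyp_mono {σ τ : Seq} {L : Set ℕ} (hs : ∀ d ∈ σ, d ∈ τ) (h : Correct τ L)
    (ha : ∀ x y, x % 3 = 0 → y % 3 = 0 → y ≤ x → x ∈ L → y ∈ L)
    (hb : ∀ x y, x % 3 = 1 → y % 3 = 2 → y < x → x ∈ L → y ∉ L)
    {x : ℕ} (hx : x ∈ L) (hh : Hyp σ x) : Hyp τ x := by
  rcases hh with ⟨hm, -⟩ | ⟨hm, ⟨d, hd, hd'⟩, -⟩ | ⟨hm, d, hd, hd'⟩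
  · refine Or.inl ⟨hm, ?_⟩
    rintro ⟨d, hd, hf, hm', hle⟩
    have := (h d hd).2 (ha x _ hm hm' hle hx)
    simp [hf] at this
  · refine Or.inr (Or.inl ⟨hm, ⟨d, hs d hd, hd'⟩, ?_⟩)
    rintro ⟨d, hd, hf, hm', hle⟩
    exact hb x _ hm hm' hle hx ((h d hd).1 hf)
  · exact Or.inr (Or.inr ⟨hm, d, hs d hd, hd'⟩)

lemma learns_of {h : Learner}
    (hh : ∀ σ : Seq, ∃ e, h (Encodable.encode σ) = Part.some e ∧ W e = {x | Hyp σ x})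
    {L : Set ℕ} (ρ : Seq) (hρ : Correct ρ L)
    (hconv : ∀ σ, Correct σ L → (∀ d ∈ ρ, d ∈ σ) → {x | Hyp σ x} = L)
    (ha : ∀ x y, x % 3 = 0 → y % 3 = 0 → y ≤ x → x ∈ L → y ∈ L)
    (hb : ∀ x y, x % 3 = 1 → y % 3 = 2 → y < x → x ∈ L → y ∉ L) :
    LearnsWith AllI Gop (fun p I => Mon p I ∧ Bc p I) h L := by
  refine ⟨?_, fun I _ hI => ⟨?_, ?_⟩⟩
  · obtain ⟨e, -, he⟩ := hh ρ
    exact ⟨e, he.trans (hconv ρ hρ fun _ h => h)⟩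
  · intro s t hst e he e' he' x hx
    obtain ⟨e₁, h1, hW1⟩ := hh (segment I s)
    obtain ⟨e₂, h2, hW2⟩ := hh (segment I t)
    simp only [Gop, h1, h2, Part.mem_some_iff] at he he'
    subst he he'
    refine ⟨?_, hx.2⟩
    have hx1 := hx.1
    rw [hW1] at hx1
    rw [hW2]
    refine hyp_mono ?_ (correct_segment hI t) ha hb (hI.1 ▸ hx.2) hx1
    intro d hd
    obtain ⟨k, hk, hkd⟩ := mem_segment.1 hd
    exact mem_segment.2 ⟨k, by omega, hkd⟩
  · have : ∀ᶠ n in atTop, ∀ d ∈ ρ.toFinset, d ∈ segment I n := by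
      rw [Filter.eventually_all_finset]
      rintro ⟨x, b⟩ hd
      apply eventually_mem
      have hc := hρ _ (List.mem_toFinset.1 hd)
      cases b
      · have : x ∈ negI I := by rw [hI.2]; simpa using hc
        exact this
      · have : x ∈ posI I := by rw [hI.1]; simpa using hc
        exact this
    filter_upwards [this] with n hn
    obtain ⟨e, h1, hW⟩ := hh (segment I n)
    refine ⟨e, by simp [Gop, h1], ?_⟩
    rw [hW, hI.1]
    exact hconv _ (correct_segment hI n) fun d hd => hn d (List.mem_toFinset.2 hd)

lemma mon_learnable : class11 ∈ Learnable TT AllL AllI Gop (fun p I => Mon p I ∧ Bc p I) := by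
  obtain ⟨h, hp, hh⟩ := exists_learner
  refine ⟨h, hp, trivial, fun _ _ _ => trivial, ?_⟩
  rintro L ((rfl | ⟨n, rfl⟩) | ⟨n, m, hnm, rfl⟩)
  · refine learns_of hh [] (by simp [Correct]) (fun σ hσ _ => hyp_X hσ) ?_ ?_ <;>
    · intro x y; simp only [mem_X]; omega
  · refine learns_of hh [(3 * n + 3, false)] ?_ (fun σ hσ hs => hyp_Y hσ (hs _ (by simp))) ?_ ?_
    · simp only [Correct, List.mem_singleton, forall_eq, mem_Y]
      simp
    all_goals intro x y; simp only [mem_Y]; omega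
  · refine learns_of hh [(3 * n + 3, false), (3 * m + 2, true)] ?_
      (fun σ hσ hs => hyp_Z hσ (hs _ (by simp)) (hs _ (by simp))) ?_ ?_
    · intro d hd
      simp only [List.mem_cons, List.not_mem_nil, or_false] at hd
      rcases hd with rfl | rfl
      · simp only [mem_Z, Bool.false_eq_true, false_iff]; omega
      · simp [mem_Z]
    all_goals intro x y; simp only [mem_Z]; omega

/-- `class11` witnesses
`[Inf G Mon Bc] \ [Inf G Mon^d Bc] ≠ ∅`. -/
theorem mon_minus_dual_mon :
    class11 ∈
      Learnable TT AllL AllI Gop (fun p I => Mon p I ∧ Bc p I) \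
        Learnable TT AllL AllI Gop (fun p I => Mond p I ∧ Bc p I) :=
  ⟨mon_learnable, not_dual⟩

end InfBc
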